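/- Let U be a finite set with |U| = n and w : U → (0,∞) a positive weight function with total weight W = Σ_{a∈U} w(a). Let a₁, …, a_m be i.i.d. proportional samples and for i ≠ j set Y_{ij} = 1/w(a_i) if a_i = a_j and Y_{ij} = 0 otherwise. Then for pairwise distinct indices i, j, k: E[Y_{ij}·Y_{ik}] = 1/W², and consequently Cov(Y_{ij}, Y_{ik}) = 0. -/

import Mathlib

open MeasureTheory ProbabilityTheory

/-!
Conditionally on `a i = x`, the variables `Y_{ij}` and `Y_{ik}` are independent, and each has mean
`(w x / W) * (w x)⁻¹ = W⁻¹`, whatever the value of `x`. Hence `Y_{ij}` has mean `W⁻¹` and the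
product `Y_{ij} * Y_{ik}` has mean `(W⁻¹)²`.

Since the samples need not be measurable functions, `μ {ω | ∀ i, a i ω = v i}` is a priori only
an outer measure. These values add up to `1`, however, and a set is null-measurable as soon as its
outer measure and that of its complement add up to the total mass; so the samples are almost
everywhere measurable, and independent.
-/

section LawOnCountableSpace

variable {Ω V : Type*} [MeasurableSpace Ω] {μ : Measure Ω}

theorem nullMeasurableSet_of_measure_add_measure_compl_le [IsFiniteMeasure μ] {s : Set Ω}
    (h : μ s + μ sᶜ ≤ μ Set.univ) : NullMeasurableSet s μ := by
  have hinner : (toMeasurable μ sᶜ)ᶜ ⊆ s := Set.compl_subset_comm.2 (subset_toMeasurable μ sᶜ)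
  have houter : s ⊆ toMeasurable μ s := subset_toMeasurable μ s
  have hmeas : NullMeasurableSet (toMeasurable μ sᶜ)ᶜ μ :=
    (measurableSet_toMeasurable μ sᶜ).compl.nullMeasurableSet
  have hle : μ (toMeasurable μ s) ≤ μ (toMeasurable μ sᶜ)ᶜ := by
    rw [measure_compl (measurableSet_toMeasurable μ sᶜ) (measure_ne_top _ _),
      measure_toMeasurable, measure_toMeasurable]
    exact ENNReal.le_sub_of_add_le_right (measure_ne_top _ _) h
  have hae := ae_eq_of_subset_of_measure_ge (hinner.trans houter) hle hmeas (measure_ne_top _ _)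
  exact hmeas.congr (hinner.eventuallyLE.antisymm (houter.eventuallyLE.trans hae.symm.le))

variable [Countable V] [MeasurableSpace V] [MeasurableSingletonClass V]

theorem measure_preimage_le_of_forall_singleton {ν : Measure V} {f : Ω → V}
    (h : ∀ v, μ (f ⁻¹' {v}) ≤ ν {v}) (s : Set V) : μ (f ⁻¹' s) ≤ ν s := by
  have hs : s.Countable := s.to_countable
  calc μ (f ⁻¹' s) = μ (⋃ v ∈ s, f ⁻¹' {v}) := by rw [Set.biUnion_preimage_singleton]
    _ ≤ ∑' v : s, μ (f ⁻¹' {↑v}) := measure_biUnion_le μ hs _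
    _ ≤ ∑' v : s, ν {↑v} := ENNReal.tsum_le_tsum fun v => h v
    _ = ν s := by
      simpa using tsum_measure_preimage_singleton (μ := ν) (f := id) hs
        fun v _ => measurableSet_singleton v

theorem hasLaw_of_forall_measure_preimage_singleton [IsFiniteMeasure μ] {ν : Measure V}
    {f : Ω → V} (hmass : ν Set.univ ≤ μ Set.univ) (h : ∀ v, μ (f ⁻¹' {v}) = ν {v}) :
    HasLaw f ν μ := by
  have hnull : NullMeasurable f μ := fun s hs =>
    nullMeasurableSet_of_measure_add_measure_compl_le <|
      calc μ (f ⁻¹' s) + μ (f ⁻¹' sᶜ) ≤ ν s + ν sᶜ := by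
            gcongr <;> exact measure_preimage_le_of_forall_singleton (fun v => (h v).le) _
        _ = ν Set.univ := measure_add_measure_compl hs
        _ ≤ μ Set.univ := hmass
  have hf : AEMeasurable f μ := hnull.aemeasurable
  refine ⟨hf, Measure.ext_of_singleton fun v => ?_⟩
  rw [Measure.map_apply_of_aemeasurable hf (measurableSet_singleton v), h]

end LawOnCountableSpace

section IndependentCoordinates

variable {Ω ι : Type*} {α : ι → Type*} [MeasurableSpace Ω] {μ : Measure Ω} [Fintype ι]
  [∀ i, MeasurableSpace (α i)] {ν : ∀ i, Measure (α i)} [∀ i, IsProbabilityMeasure (ν i)]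
  {X : ∀ i, Ω → α i}

theorem hasLaw_pi_of_forall_measure_eq_prod [IsProbabilityMeasure μ] [∀ i, Countable (α i)]
    [∀ i, MeasurableSingletonClass (α i)]
    (h : ∀ v : ∀ i, α i, μ {ω | ∀ i, X i ω = v i} = ∏ i, ν i {v i}) :
    HasLaw (fun ω i => X i ω) (Measure.pi ν) μ := by
  refine hasLaw_of_forall_measure_preimage_singleton (by simp) fun v => ?_
  rw [Measure.pi_singleton, ← h]
  simp [Set.preimage, funext_iff]

theorem hasLaw_apply_of_hasLaw_pi (h : HasLaw (fun ω i => X i ω) (Measure.pi ν) μ) (i : ι) :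
    HasLaw (X i) (ν i) μ :=
  (measurePreserving_eval ν i).fun_comp_hasLaw h

theorem iIndepFun_of_hasLaw_pi (h : HasLaw (fun ω i => X i ω) (Measure.pi ν) μ) :
    iIndepFun X μ :=
  have := h.isProbabilityMeasure
  (iIndepFun_iff_hasLaw_pi_pi (hasLaw_apply_of_hasLaw_pi h)).2 h

theorem hasLaw_prodMk_of_hasLaw_pi (h : HasLaw (fun ω i => X i ω) (Measure.pi ν) μ)
    {i j : ι} (hij : i ≠ j) : HasLaw (fun ω => (X i ω, X j ω)) ((ν i).prod (ν j)) μ :=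
  have := h.isProbabilityMeasure
  ((iIndepFun_of_hasLaw_pi h).indepFun hij).hasLaw_prod (hasLaw_apply_of_hasLaw_pi h i)
    (hasLaw_apply_of_hasLaw_pi h j)

theorem hasLaw_prodMk_prodMk_of_hasLaw_pi (h : HasLaw (fun ω i => X i ω) (Measure.pi ν) μ)
    {i j k : ι} (hij : i ≠ j) (hik : i ≠ k) (hjk : j ≠ k) :
    HasLaw (fun ω => (X i ω, X j ω, X k ω)) ((ν i).prod ((ν j).prod (ν k))) μ := by
  have := h.isProbabilityMeasure
  have hindep : X i ⟂ᵢ[μ] fun ω => (X j ω, X k ω) :=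
    ((iIndepFun_of_hasLaw_pi h).indepFun_prodMk₀
      (fun l => (hasLaw_apply_of_hasLaw_pi h l).aemeasurable) j k i hij.symm hik.symm).symm
  exact hindep.hasLaw_prod (hasLaw_apply_of_hasLaw_pi h i) (hasLaw_prodMk_of_hasLaw_pi h hjk)

end IndependentCoordinates

theorem integral_eq_of_hasLaw_prod_of_forall_integral_eq {Ω α β : Type*} [MeasurableSpace Ω]
    [MeasurableSpace α] [MeasurableSpace β] {μ : Measure Ω} {ξ : Measure α} {η : Measure β}
    [IsProbabilityMeasure ξ] [SFinite η] {X : Ω → α} {T : Ω → β}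
    (hXT : HasLaw (fun ω => (X ω, T ω)) (ξ.prod η) μ) {F : α → β → ℝ}
    (hF : AEStronglyMeasurable (Function.uncurry F) (ξ.prod η)) (hF_nonneg : ∀ x y, 0 ≤ F x y)
    (hF_int : ∀ x, Integrable (F x) η) {c : ℝ} (hc : ∀ x, ∫ y, F x y ∂η = c) :
    ∫ ω, F (X ω) (T ω) ∂μ = c := by
  have hint : Integrable (Function.uncurry F) (ξ.prod η) := by
    refine (integrable_prod_iff hF).2 ⟨.of_forall hF_int, ?_⟩
    simp [abs_of_nonneg, hF_nonneg, hc]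
  calc ∫ ω, F (X ω) (T ω) ∂μ = ∫ p, Function.uncurry F p ∂ξ.prod η := hXT.integral_comp hF
    _ = ∫ x, ∫ y, F x y ∂η ∂ξ := integral_prod _ hint
    _ = c := by simp [hc]

section PairEstimator

variable {U : Type*}

/-- The law of a proportional sample, under which `x` has probability `w x / W`. -/
noncomputable def proportionalPMF (w : U → ℝ) (hw : ∀ x, 0 ≤ w x) {W : ℝ} (hW : HasSum w W)
    (hW0 : W ≠ 0) : PMF U :=
  ⟨fun x => ENNReal.ofReal (w x / W), by
    have hsum : HasSum (fun x => w x / W) 1 := div_self hW0 ▸ hW.div_const W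
    have hnonneg : ∀ x, 0 ≤ w x / W := fun x => div_nonneg (hw x) (hW.nonneg hw)
    rw [ENNReal.summable.hasSum_iff, ← ENNReal.ofReal_tsum_of_nonneg hnonneg hsum.summable,
      hsum.tsum_eq, ENNReal.ofReal_one]⟩

theorem toMeasure_proportionalPMF_singleton [MeasurableSpace U] [MeasurableSingletonClass U]
    {w : U → ℝ} (hw : ∀ x, 0 ≤ w x) {W : ℝ} (hW : HasSum w W) (hW0 : W ≠ 0) (x : U) :
    (proportionalPMF w hw hW hW0).toMeasure {x} = ENNReal.ofReal (w x / W) :=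
  PMF.toMeasure_apply_singleton _ x (measurableSet_singleton x)

variable [DecidableEq U] {w : U → ℝ}

/-- The estimator `Y_{ij}` as a function of the samples: it is `pairEstimator w (a i) (a j)`. -/
noncomputable def pairEstimator (w : U → ℝ) (x y : U) : ℝ := if x = y then (w x)⁻¹ else 0

theorem pairEstimator_nonneg (hw : ∀ x, 0 ≤ w x) (x y : U) : 0 ≤ pairEstimator w x y := by
  rw [pairEstimator]
  split_ifs
  exacts [inv_nonneg.2 (hw x), le_rfl]

theorem pairEstimator_eq_indicator (w : U → ℝ) (x : U) :
    pairEstimator w x = Set.indicator {x} fun _ => (w x)⁻¹ := by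
  ext y
  simp [pairEstimator, Set.indicator_apply, eq_comm]

variable [MeasurableSpace U] [MeasurableSingletonClass U]

theorem integrable_pairEstimator (ν : Measure U) [IsFiniteMeasure ν] (w : U → ℝ) (x : U) :
    Integrable (pairEstimator w x) ν := by
  rw [pairEstimator_eq_indicator]
  exact (integrable_const _).indicator (measurableSet_singleton x)

theorem integral_pairEstimator (ν : Measure U) (w : U → ℝ) (x : U) :
    ∫ y, pairEstimator w x y ∂ν = ν.real {x} * (w x)⁻¹ := by
  rw [pairEstimator_eq_indicator, integral_indicator_const _ (measurableSet_singleton x),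
    smul_eq_mul]

theorem integral_pairEstimator_proportionalPMF (hw : ∀ x, 0 < w x) {W : ℝ} (hW : HasSum w W)
    (hW0 : W ≠ 0) (x : U) :
    ∫ y, pairEstimator w x y ∂(proportionalPMF w (fun x => (hw x).le) hW hW0).toMeasure = W⁻¹ := by
  have hprob : (proportionalPMF w (fun x => (hw x).le) hW hW0).toMeasure.real {x} = w x / W := by
    rw [Measure.real, toMeasure_proportionalPMF_singleton,
      ENNReal.toReal_ofReal (div_nonneg (hw x).le (hW.nonneg fun x => (hw x).le))]
  rw [integral_pairEstimator, hprob, div_mul_eq_mul_div, mul_inv_cancel₀ (hw x).ne', one_div]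

section Independent

variable [Countable U] {Ω : Type*} [MeasurableSpace Ω] {μ : Measure Ω} {ξ ν ν' : Measure U}
  [IsProbabilityMeasure ξ] [IsFiniteMeasure ν] [IsFiniteMeasure ν'] {X Y Z : Ω → U} {c d : ℝ}

theorem integral_pairEstimator_of_hasLaw_prod (hw : ∀ x, 0 ≤ w x)
    (hXY : HasLaw (fun ω => (X ω, Y ω)) (ξ.prod ν) μ)
    (hc : ∀ x, ∫ y, pairEstimator w x y ∂ν = c) :
    ∫ ω, pairEstimator w (X ω) (Y ω) ∂μ = c :=
  integral_eq_of_hasLaw_prod_of_forall_integral_eq hXY .of_discrete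
    (pairEstimator_nonneg hw) (integrable_pairEstimator ν w) hc

theorem integral_pairEstimator_mul_pairEstimator_of_hasLaw_prod (hw : ∀ x, 0 ≤ w x)
    (hXYZ : HasLaw (fun ω => (X ω, Y ω, Z ω)) (ξ.prod (ν.prod ν')) μ)
    (hc : ∀ x, ∫ y, pairEstimator w x y ∂ν = c) (hd : ∀ x, ∫ z, pairEstimator w x z ∂ν' = d) :
    ∫ ω, pairEstimator w (X ω) (Y ω) * pairEstimator w (X ω) (Z ω) ∂μ = c * d :=
  integral_eq_of_hasLaw_prod_of_forall_integral_eq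
    (F := fun x p => pairEstimator w x p.1 * pairEstimator w x p.2) hXYZ .of_discrete
    (fun x p => mul_nonneg (pairEstimator_nonneg hw x p.1) (pairEstimator_nonneg hw x p.2))
    (fun x => (integrable_pairEstimator ν w x).mul_prod (integrable_pairEstimator ν' w x))
    fun x => by rw [integral_prod_mul, hc, hd]

end Independent

end PairEstimator

theorem pair_estimators_uncorrelated_general {Ω U ι : Type*} [MeasurableSpace Ω] (μ : Measure Ω)
    [IsProbabilityMeasure μ] [DecidableEq U] [Fintype ι] {w : U → ℝ} (hw : ∀ x, 0 < w x)
    {W : ℝ} (hW : HasSum w W) {a : ι → Ω → U}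
    (hlaw : ∀ v : ι → U, μ {ω | ∀ i, a i ω = v i} = ∏ i, ENNReal.ofReal (w (v i) / W))
    {i j k : ι} (hij : i ≠ j) (hik : i ≠ k) (hjk : j ≠ k) {Yij Yik : Ω → ℝ}
    (hYij : ∀ ω, Yij ω = if a i ω = a j ω then (w (a i ω))⁻¹ else 0)
    (hYik : ∀ ω, Yik ω = if a i ω = a k ω then (w (a i ω))⁻¹ else 0) :
    ∫ ω, Yij ω * Yik ω ∂μ = (W ^ 2)⁻¹ ∧
      ∫ ω, Yij ω * Yik ω ∂μ - (∫ ω, Yij ω ∂μ) * (∫ ω, Yik ω ∂μ) = 0 := by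
  obtain rfl : Yij = fun ω => pairEstimator w (a i ω) (a j ω) := funext hYij
  obtain rfl : Yik = fun ω => pairEstimator w (a i ω) (a k ω) := funext hYik
  obtain ⟨ω₀⟩ : Nonempty Ω := nonempty_of_isProbabilityMeasure μ
  have hw0 : ∀ x, 0 ≤ w x := fun x => (hw x).le
  have hW0 : W ≠ 0 := ((hw (a i ω₀)).trans_le (le_hasSum hW _ fun x _ => hw0 x)).ne'
  have hsupp : Function.support w = Set.univ := Set.eq_univ_of_forall fun x => (hw x).ne'
  have : Countable U := Set.countable_univ_iff.1 (hsupp ▸ hW.summable.countable_support)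
  let _ : MeasurableSpace U := ⊤
  let ν : Measure U := (proportionalPMF w hw0 hW hW0).toMeasure
  have hlaw_pi : HasLaw (fun ω l => a l ω) (Measure.pi fun _ => ν) μ :=
    hasLaw_pi_of_forall_measure_eq_prod fun v => by
      simp_rw [ν, toMeasure_proportionalPMF_singleton, hlaw]
  have hmean : ∀ x, ∫ y, pairEstimator w x y ∂ν = W⁻¹ :=
    integral_pairEstimator_proportionalPMF hw hW hW0
  rw [integral_pairEstimator_mul_pairEstimator_of_hasLaw_prod hw0
      (hasLaw_prodMk_prodMk_of_hasLaw_pi hlaw_pi hij hik hjk) hmean hmean,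
    integral_pairEstimator_of_hasLaw_prod hw0 (hasLaw_prodMk_of_hasLaw_pi hlaw_pi hij) hmean,
    integral_pairEstimator_of_hasLaw_prod hw0 (hasLaw_prodMk_of_hasLaw_pi hlaw_pi hik) hmean]
  exact ⟨by rw [sq, mul_inv], sub_self _⟩

/-- For i.i.d. proportional samples and pairwise distinct indices `i, j, k`,
the estimators `Y_{ij}` and `Y_{ik}` satisfy `E[Y_{ij}·Y_{ik}] = 1/W²`, and consequently
their covariance `E[Y_{ij}·Y_{ik}] − E[Y_{ij}]·E[Y_{ik}]` vanishes. -/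
theorem pair_estimators_uncorrelated
    {Ω U : Type*} [MeasurableSpace Ω] (μ : Measure Ω) [IsProbabilityMeasure μ]
    [Fintype U] [DecidableEq U]
    (n : ℕ) (hn : Fintype.card U = n)
    (w : U → ℝ) (hw : ∀ x, 0 < w x)
    (W : ℝ) (hW : W = ∑ x, w x)
    (m : ℕ) (a : Fin m → Ω → U)
    (hlaw : ∀ v : Fin m → U,
      μ {ω | ∀ i, a i ω = v i} = ∏ i, ENNReal.ofReal (w (v i) / W))
    (i j k : Fin m) (hij : i ≠ j) (hik : i ≠ k) (hjk : j ≠ k)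
    (Yij Yik : Ω → ℝ)
    (hYij : ∀ ω, Yij ω = if a i ω = a j ω then (w (a i ω))⁻¹ else 0)
    (hYik : ∀ ω, Yik ω = if a i ω = a k ω then (w (a i ω))⁻¹ else 0) :
    ∫ ω, Yij ω * Yik ω ∂μ = (W ^ 2)⁻¹ ∧
      ∫ ω, Yij ω * Yik ω ∂μ - (∫ ω, Yij ω ∂μ) * (∫ ω, Yik ω ∂μ) = 0 :=
  pair_estimators_uncorrelated_general μ hw (hW ▸ hasSum_fintype w) hlaw hij hik hjk hYij hYik
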